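/- Let F be a regular bi-Hilbertian A–B-bimodule with right Watatani index e^β ∈ M(A) (positive, central, invertible). Then the map P₀ : K(F_B) → K(F_B) defined by P₀(T) = e^{−β} Υ(T) Id_F (where Υ(Θ_{e,f}) = {}_A⟨e, f⟩) is an A-bilinear adjointable projection on the bi-Hilbertian bimodule K(F_B) ≅ F ⊗_B F*, and its image A · Id_F is a complemented sub-bimodule isomorphic to the identity bimodule A. -/

import Mathlib

noncomputable section

open Filter Topology

universe u

/-- A bundled right Hilbert C*-module structure over a (possibly non-unital)
C*-algebra `B` on a complete normed complex vector space `X`.  The fields record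
the right `B`-action, the `B`-valued inner product, and their standard axioms,
including positivity of inner products and compatibility of the norm. -/
structure HilbertModule (B : Type u) (X : Type u)
    [NonUnitalCStarAlgebra B] [NormedAddCommGroup X] [NormedSpace ℂ X] [CompleteSpace X] :
    Type u where
  smulR : X → B → X
  inner : X → X → B
  smulR_add : ∀ (x : X) (b c : B), smulR x (b + c) = smulR x b + smulR x c
  add_smulR : ∀ (x y : X) (b : B), smulR (x + y) b = smulR x b + smulR y b
  smulR_mul : ∀ (x : X) (b c : B), smulR x (b * c) = smulR (smulR x b) c
  smulC_smulR : ∀ (c : ℂ) (x : X) (b : B), smulR (c • x) b = c • smulR x b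
  inner_add_left : ∀ x y z : X, inner (x + y) z = inner x z + inner y z
  inner_add_right : ∀ x y z : X, inner x (y + z) = inner x y + inner x z
  inner_smulR_right : ∀ (x y : X) (b : B), inner x (smulR y b) = inner x y * b
  inner_smulC_right : ∀ (c : ℂ) (x y : X), inner x (c • y) = c • inner x y
  star_inner : ∀ x y : X, star (inner x y) = inner y x
  inner_self_pos : ∀ x : X, ∃ b : B, inner x x = star b * b
  norm_inner_self : ∀ x : X, ‖x‖ ^ 2 = ‖inner x x‖

/-- `T : X → Y` and `S : Y → X` are mutually adjoint operators between
right Hilbert `B`-modules. -/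
def HilbertModule.IsAdjointPair {B X Y : Type u} [NonUnitalCStarAlgebra B]
    [NormedAddCommGroup X] [NormedSpace ℂ X] [CompleteSpace X]
    [NormedAddCommGroup Y] [NormedSpace ℂ Y] [CompleteSpace Y]
    (hX : HilbertModule B X) (hY : HilbertModule B Y)
    (T : X → Y) (S : Y → X) : Prop :=
  ∀ (x : X) (y : Y), hY.inner (T x) y = hX.inner x (S y)

/-- Positivity in a C*-algebra, expressed as being of the form `star c * c`. -/
def IsPositiveElem {B : Type u} [NonUnitalCStarAlgebra B] (b : B) : Prop :=
  ∃ c : B, b = star c * c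

/-- Positivity of a matrix over a C*-algebra. -/
def MatrixIsPositive {A : Type u} [NonUnitalCStarAlgebra A] {n : ℕ}
    (M : Matrix (Fin n) (Fin n) A) : Prop :=
  ∃ N : Matrix (Fin n) (Fin n) A, M = N.conjTranspose * N

/-- A sequential (the algebras in question are separable) approximate unit. -/
structure IsApproxUnit {A : Type u} [NonUnitalCStarAlgebra A] (e : ℕ → A) : Prop where
  pos : ∀ n, IsPositiveElem (e n)
  norm_le_one : ∀ n, ‖e n‖ ≤ 1
  tendsto_mul_left : ∀ a : A, Tendsto (fun n => e n * a) atTop (𝓝 a)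
  tendsto_mul_right : ∀ a : A, Tendsto (fun n => a * e n) atTop (𝓝 a)

/-- A completely positive map between C*-algebras: a linear map sending positive
matrices to positive matrices at every matrix level. -/
structure IsCPMap {A B : Type u} [NonUnitalCStarAlgebra A] [NonUnitalCStarAlgebra B]
    (ρ : A → B) : Prop where
  map_add : ∀ a a', ρ (a + a') = ρ a + ρ a'
  map_smul : ∀ (c : ℂ) (a : A), ρ (c • a) = c • ρ a
  map_pos_matrix : ∀ (n : ℕ) (M : Matrix (Fin n) (Fin n) A),
    MatrixIsPositive M → MatrixIsPositive (M.map ρ)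

/-- A map between C*-algebras is strict if some approximate unit of the domain is
sent to a strictly Cauchy net in the multiplier algebra of the codomain. -/
def IsStrictMap {A B : Type u} [NonUnitalCStarAlgebra A] [NonUnitalCStarAlgebra B]
    (ρ : A → B) : Prop :=
  ∃ e : ℕ → A, IsApproxUnit e ∧
    ∀ b : B, CauchySeq (fun n => ρ (e n) * b) ∧ CauchySeq (fun n => b * ρ (e n))

/-- A completely positive map from `A` into the adjointable operators on a
right Hilbert `B`-module `X`. -/
structure IsCPAction {A B X : Type u} [NonUnitalCStarAlgebra A] [NonUnitalCStarAlgebra B]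
    [NormedAddCommGroup X] [NormedSpace ℂ X] [CompleteSpace X]
    (hX : HilbertModule B X) (ρ : A → X → X) : Prop where
  map_add : ∀ a a' x, ρ (a + a') x = ρ a x + ρ a' x
  map_smul : ∀ (c : ℂ) (a : A) x, ρ (c • a) x = c • ρ a x
  add_right : ∀ a x y, ρ a (x + y) = ρ a x + ρ a y
  adjointable : ∀ a, ∃ S, HilbertModule.IsAdjointPair hX hX (ρ a) S
  pos : ∀ (n : ℕ) (M : Matrix (Fin n) (Fin n) A), MatrixIsPositive M →
    ∀ x : Fin n → X, IsPositiveElem (∑ i, ∑ j, hX.inner (x i) (ρ (M i j) (x j)))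

/-- Strictness for a completely positive map into the adjointable operators on a
Hilbert module: some approximate unit is mapped to a strictly Cauchy net. -/
def IsStrictAction {A B X : Type u} [NonUnitalCStarAlgebra A] [NonUnitalCStarAlgebra B]
    [NormedAddCommGroup X] [NormedSpace ℂ X] [CompleteSpace X]
    (hX : HilbertModule B X) (ρ : A → X → X) : Prop :=
  ∃ e : ℕ → A, IsApproxUnit e ∧ ∃ S : ℕ → X → X,
    (∀ n, HilbertModule.IsAdjointPair hX hX (ρ (e n)) (S n)) ∧
    ∀ x, CauchySeq (fun n => ρ (e n) x) ∧ CauchySeq (fun n => S n x)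

/-- A left action of `A` on a Hilbert `B`-module by adjointable operators via a
*-homomorphism, i.e. the structure of an `A`–`B`-correspondence. -/
structure IsCorrespondenceAction {A B X : Type u} [NonUnitalCStarAlgebra A]
    [NonUnitalCStarAlgebra B]
    [NormedAddCommGroup X] [NormedSpace ℂ X] [CompleteSpace X]
    (hX : HilbertModule B X) (φ : A → X → X) : Prop where
  map_add : ∀ a a' x, φ (a + a') x = φ a x + φ a' x
  map_mul : ∀ a a' x, φ (a * a') x = φ a (φ a' x)
  map_smul : ∀ (c : ℂ) (a : A) x, φ (c • a) x = c • φ a x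
  add_right : ∀ a x y, φ a (x + y) = φ a x + φ a y
  star_adjoint : ∀ a, HilbertModule.IsAdjointPair hX hX (φ a) (φ (star a))

/-- The trivial right Hilbert `B`-module structure on `B` itself. -/
def trivHM (B : Type u) [NonUnitalCStarAlgebra B] : HilbertModule B B where
  smulR b c := b * c
  inner b c := star b * c
  smulR_add := by intros; simp [mul_add]
  add_smulR := by intros; simp [add_mul]
  smulR_mul := by intros; simp [mul_assoc]
  smulC_smulR := by intros; simp [smul_mul_assoc]
  inner_add_left := by intros; simp [star_add, add_mul]
  inner_add_right := by intros; simp [mul_add]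
  inner_smulR_right := by intros; simp [mul_assoc]
  inner_smulC_right := by intros; simp [mul_smul_comm]
  star_inner := by intros; simp [star_mul, mul_assoc]
  inner_self_pos := fun b => ⟨b, rfl⟩
  norm_inner_self := by intro b; rw [CStarRing.norm_star_mul_self, pow_two]

/-- `T` is "compact relative to the projection/identification `Q`": it can be
approximated in operator norm by finite sums of rank-one operators
`θ_{u,v} : z ↦ u⟨v, z⟩` with vectors in the image of `Q`.  With `Q = id` this
says `T ∈ K(X)`. -/
def IsCptOn {B X : Type u} [NonUnitalCStarAlgebra B]
    [NormedAddCommGroup X] [NormedSpace ℂ X] [CompleteSpace X]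
    (hX : HilbertModule B X) (Q : X → X) (T : X → X) : Prop :=
  ∀ ε : ℝ, 0 < ε → ∃ (n : ℕ) (u v : Fin n → X), ∀ z : X,
    ‖T (Q z) - ∑ i, hX.smulR (Q (u i)) (hX.inner (Q (v i)) (Q z))‖ ≤ ε * ‖Q z‖

/-- A bi-Hilbertian `A`–`B`-bimodule: a right Hilbert `B`-module `F` with an
additional left `A`-action `actL` and left `A`-valued inner product `innerL`
making it a left Hilbert `A`-module, such that each action is adjointable for
the other inner product and the two norms are equivalent. -/
structure BiHilbertModule (A B F : Type u)
    [NonUnitalCStarAlgebra A] [NonUnitalCStarAlgebra B]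
    [NormedAddCommGroup F] [NormedSpace ℂ F] [CompleteSpace F] : Type u where
  right : HilbertModule B F
  actL : A → F → F
  actL_corr : IsCorrespondenceAction right actL
  innerL : F → F → A
  innerL_add_left : ∀ x y z, innerL (x + y) z = innerL x z + innerL y z
  innerL_add_right : ∀ x y z, innerL x (y + z) = innerL x y + innerL x z
  innerL_actL_left : ∀ (a : A) x y, innerL (actL a x) y = a * innerL x y
  star_innerL : ∀ x y, star (innerL x y) = innerL y x
  innerL_pos : ∀ x, IsPositiveElem (innerL x x)
  -- the right `B`-action is adjointable for the left inner product
  innerL_smulR : ∀ x y (b : B), innerL (right.smulR x b) y = innerL x (right.smulR y (star b))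
  -- the two inner products induce equivalent norms
  norm_equiv : ∃ c : ℝ, 0 < c ∧ ∀ x,
    ‖innerL x x‖ ≤ c * ‖right.inner x x‖ ∧ ‖right.inner x x‖ ≤ c * ‖innerL x x‖

/-- A model of the multiplier algebra `M(A)` of `A`: a unital C*-algebra `MA`
containing `A` isometrically as an essential two-sided ideal. -/
structure MultiplierData (A MA : Type u) [NonUnitalCStarAlgebra A] [CStarAlgebra MA] :
    Type u where
  ι : A →⋆ₙₐ[ℂ] MA
  isometric : ∀ a : A, ‖ι a‖ = ‖a‖
  ideal_left : ∀ (m : MA) (a : A), ∃ a', ι a' = m * ι a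
  ideal_right : ∀ (m : MA) (a : A), ∃ a', ι a' = ι a * m
  essential : ∀ m : MA, (∀ a : A, m * ι a = 0) → m = 0

/-- Regularity data for a bi-Hilbertian bimodule `F` of finite right Watatani
index: the index `e^β` (with inverse `e^{-β}` and square root `e^{-β/2}` of the
inverse) as a positive central invertible multiplier, defined as the strict
limit of `Σⱼ {}_A⟨uⱼ, uⱼ⟩` over a right frame `(uⱼ)`, together with the extension
of the left action to multipliers and the regularity conditions. -/
structure WatataniData {A B F MA : Type u}
    [NonUnitalCStarAlgebra A] [NonUnitalCStarAlgebra B] [CStarAlgebra MA]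
    [NormedAddCommGroup F] [NormedSpace ℂ F] [CompleteSpace F]
    (bi : BiHilbertModule A B F) (M : MultiplierData A MA) : Type u where
  actM : MA → F → F
  actM_one : ∀ x, actM 1 x = x
  actM_mul : ∀ m m' x, actM (m * m') x = actM m (actM m' x)
  actM_add : ∀ m x y, actM m (x + y) = actM m x + actM m y
  actM_ι : ∀ (a : A) x, actM (M.ι a) x = bi.actL a x
  actM_adjoint : ∀ m, HilbertModule.IsAdjointPair bi.right bi.right (actM m) (actM (star m))
  eβ : MA
  einvβ : MA
  ehalf : MA
  eβ_central : ∀ m, eβ * m = m * eβ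
  einvβ_central : ∀ m, einvβ * m = m * einvβ
  ehalf_central : ∀ m, ehalf * m = m * ehalf
  eβ_pos : IsPositiveElem eβ
  ehalf_pos : IsPositiveElem ehalf
  eβ_inv : eβ * einvβ = 1
  ehalf_sq : ehalf * ehalf = einvβ
  frame : ℕ → F
  frame_spec : ∀ z : F, Tendsto
    (fun N => ∑ j ∈ Finset.range N, bi.right.smulR (frame j) (bi.right.inner (frame j) z))
    atTop (𝓝 z)
  -- `e^β` is the strict limit of `Σⱼ {}_A⟨uⱼ, uⱼ⟩`
  index_spec : ∀ a : A, Tendsto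
    (fun N => ∑ j ∈ Finset.range N, M.ι (bi.innerL (frame j) (frame j)) * M.ι a)
    atTop (𝓝 (eβ * M.ι a))
  -- finite index: the left action is by compact operators
  finite_index : ∀ a : A, IsCptOn bi.right id (bi.actL a)
  -- regularity: the left action and the right action are injective
  injective_left : ∀ a : A, (∀ x : F, bi.actL a x = 0) → a = 0
  injective_right : ∀ b : B, (∀ x : F, bi.right.smulR x b = 0) → b = 0

/-- The map `Υ : K(F_B) → A`, `Υ(Θ_{e,f}) = {}_A⟨e, f⟩`, on compact operators
(cf. Statement 13), recorded with its characteristic properties. -/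
structure UpsilonData {A B F : Type u}
    [NonUnitalCStarAlgebra A] [NonUnitalCStarAlgebra B]
    [NormedAddCommGroup F] [NormedSpace ℂ F] [CompleteSpace F]
    (bi : BiHilbertModule A B F) : Type u where
  Υ : (F → F) → A
  rank_one : ∀ e f : F, Υ (fun z => bi.right.smulR e (bi.right.inner f z)) = bi.innerL e f
  add : ∀ T S : F → F, IsCptOn bi.right id T → IsCptOn bi.right id S →
    Υ (fun z => T z + S z) = Υ T + Υ S
  bilin_left : ∀ (a : A) (T : F → F), IsCptOn bi.right id T →
    Υ (fun z => bi.actL a (T z)) = a * Υ T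
  bilin_right : ∀ (a : A) (T : F → F), IsCptOn bi.right id T →
    Υ (fun z => T (bi.actL a z)) = Υ T * a
  pos : ∀ T T' : F → F, IsCptOn bi.right id T →
    HilbertModule.IsAdjointPair bi.right bi.right T T' →
    IsPositiveElem (Υ (fun z => T' (T z)))

/-!
`Υ` is linear and positive on the C⋆-algebra `𝓚(F)`, hence continuous and `⋆`-preserving. For a
right frame `(uⱼ)` the operators `∑_{j < N} Θ_{uⱼ,uⱼ}` converge strongly to the identity, so their
products with the compact operator `a · Id_F` converge to it in norm; applying `Υ` gives
`Υ(a · Id_F) = lim ∑ⱼ {}_A⟨uⱼ, uⱼ⟩ a = e^β a`. Thus `P₀` fixes `A · Id_F`, which contains its image,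
and everything else is algebra with the central element `e^{-β}`.
-/

namespace HilbertModule

variable {B X : Type u} [NonUnitalCStarAlgebra B] [NormedAddCommGroup X] [NormedSpace ℂ X]
  [CompleteSpace X] (hX : HilbertModule B X)

theorem inner_smulR_left (x y : X) (b : B) :
    hX.inner (hX.smulR x b) y = star b * hX.inner x y := by
  rw [← hX.star_inner, hX.inner_smulR_right, star_mul, hX.star_inner]

theorem inner_smulC_left (c : ℂ) (x y : X) : hX.inner (c • x) y = star c • hX.inner x y := by
  rw [← hX.star_inner, hX.inner_smulC_right, star_smul, hX.star_inner]

section CauchySchwarz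

attribute [local instance] CStarAlgebra.spectralOrder CStarAlgebra.spectralOrderedRing

/-- Mathlib's Hilbert C⋆-modules are left modules with `⟪x, a • y⟫ = a * ⟪x, y⟫`, so a right Hilbert
`B`-module is one of them over `Bᵐᵒᵖ`; this gives access to the Cauchy–Schwarz inequality. -/
@[reducible]
def toCStarModule :
    letI : SMul Bᵐᵒᵖ X := ⟨fun b x => hX.smulR x b.unop⟩
    CStarModule Bᵐᵒᵖ X :=
  letI : SMul Bᵐᵒᵖ X := ⟨fun b x => hX.smulR x b.unop⟩
  { inner x y := .op (hX.inner x y)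
    inner_add_right := congrArg MulOpposite.op (hX.inner_add_right _ _ _)
    inner_self_nonneg {x} := by
      obtain ⟨b, hb⟩ := hX.inner_self_pos x
      rw [hb]
      exact mul_star_self_nonneg (MulOpposite.op b)
    inner_self {x} := by
      rw [MulOpposite.op_eq_zero_iff, ← norm_eq_zero, ← hX.norm_inner_self]
      simp
    inner_op_smul_right := congrArg MulOpposite.op (hX.inner_smulR_right _ _ _)
    inner_smul_right_complex := congrArg MulOpposite.op (hX.inner_smulC_right _ _ _)
    star_inner x y := congrArg MulOpposite.op (hX.star_inner x y)
    norm_eq_sqrt_norm_inner_self x := by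
      rw [MulOpposite.norm_op, ← hX.norm_inner_self, Real.sqrt_sq (norm_nonneg x)] }

theorem norm_inner_le (x y : X) : ‖hX.inner x y‖ ≤ ‖x‖ * ‖y‖ :=
  letI : SMul Bᵐᵒᵖ X := ⟨fun b x => hX.smulR x b.unop⟩
  letI := hX.toCStarModule
  CStarModule.norm_inner_le (A := Bᵐᵒᵖ) X

end CauchySchwarz

/-- The bounded linear map `⟨x, ·⟩`. -/
def innerRight (x : X) : X →L[ℂ] B :=
  LinearMap.mkContinuous
    { toFun := hX.inner x
      map_add' := hX.inner_add_right x
      map_smul' c y := hX.inner_smulC_right c x y } ‖x‖ (hX.norm_inner_le x)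

theorem continuous_inner_right (x : X) : Continuous (hX.inner x) :=
  (hX.innerRight x).continuous

theorem continuous_inner_left (y : X) : Continuous fun x => hX.inner x y := by
  simpa only [hX.star_inner] using (hX.continuous_inner_right y).star

theorem inner_sub_right (x y z : X) : hX.inner x (y - z) = hX.inner x y - hX.inner x z :=
  map_sub (hX.innerRight x) y z

theorem inner_sub_left (x y z : X) : hX.inner (x - y) z = hX.inner x z - hX.inner y z := by
  rw [← hX.star_inner, inner_sub_right, star_sub, hX.star_inner, hX.star_inner]

theorem ext_inner {x y : X} (h : ∀ z, hX.inner x z = hX.inner y z) : x = y := by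
  rw [← sub_eq_zero, ← norm_eq_zero, ← sq_eq_zero_iff, hX.norm_inner_self, inner_sub_left, h,
    sub_self, norm_zero]

theorem norm_smulR_le (x : X) (b : B) : ‖hX.smulR x b‖ ≤ ‖x‖ * ‖b‖ := by
  refine le_of_sq_le_sq ?_ (by positivity)
  calc ‖hX.smulR x b‖ ^ 2 = ‖star b * hX.inner x x * b‖ := by
        rw [hX.norm_inner_self, hX.inner_smulR_right, inner_smulR_left]
    _ ≤ ‖star b‖ * ‖hX.inner x x‖ * ‖b‖ := norm_mul₃_le
    _ = (‖x‖ * ‖b‖) ^ 2 := by rw [norm_star, ← hX.norm_inner_self]; ring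

/-- The bounded linear map `b ↦ x b`. -/
def smulRight (x : X) : B →L[ℂ] X :=
  LinearMap.mkContinuous
    { toFun := hX.smulR x
      map_add' := hX.smulR_add x
      map_smul' c b := hX.ext_inner fun z => by
        rw [RingHom.id_apply, inner_smulC_left, inner_smulR_left, inner_smulR_left, star_smul,
          smul_mul_assoc] } ‖x‖ (hX.norm_smulR_le x)

section IsAdjointPair

variable {Y : Type u} [NormedAddCommGroup Y] [NormedSpace ℂ Y] [CompleteSpace Y]
  {hX : HilbertModule B X} {hY : HilbertModule B Y}

theorem IsAdjointPair.symm {T : X → Y} {S : Y → X} (h : IsAdjointPair hX hY T S) :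
    IsAdjointPair hY hX S T := fun y x => by
  rw [← hX.star_inner, ← h, hY.star_inner]

theorem IsAdjointPair.unique {T : X → Y} {S S' : Y → X} (h : IsAdjointPair hX hY T S)
    (h' : IsAdjointPair hX hY T S') : S = S' :=
  funext fun y => hX.ext_inner fun x => by rw [h.symm, h'.symm]

end IsAdjointPair

/-- The algebra `𝓛(X)` of adjointable operators on a Hilbert module `X`. -/
def adjointable : Subalgebra ℂ (X →L[ℂ] X) where
  carrier := {T | ∃ S : X →L[ℂ] X, IsAdjointPair hX hX T S}
  mul_mem' := by
    rintro T₁ T₂ ⟨S₁, h₁⟩ ⟨S₂, h₂⟩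
    exact ⟨S₂ * S₁, fun x y => (h₁ _ _).trans (h₂ _ _)⟩
  add_mem' := by
    rintro T₁ T₂ ⟨S₁, h₁⟩ ⟨S₂, h₂⟩
    exact ⟨S₁ + S₂, fun x y => by simp [hX.inner_add_left, hX.inner_add_right, h₁ x y, h₂ x y]⟩
  algebraMap_mem' c := ⟨star c • 1, fun x y => by
    simp [Algebra.algebraMap_eq_smul_one, inner_smulC_left, hX.inner_smulC_right]⟩

namespace adjointable

variable {hX}

instance : CoeFun hX.adjointable fun _ => X → X := ⟨fun T => (T : X →L[ℂ] X)⟩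

theorem coe_injective {T S : hX.adjointable} (h : (T : X → X) = S) : T = S :=
  Subtype.ext (DFunLike.coe_injective h)

theorem map_smulR (T : hX.adjointable) (x : X) (b : B) : T (hX.smulR x b) = hX.smulR (T x) b := by
  obtain ⟨S, hS⟩ := T.2
  exact hX.ext_inner fun z => by rw [hS, inner_smulR_left, inner_smulR_left, hS]

instance : Star hX.adjointable := ⟨fun T => ⟨T.2.choose, T, T.2.choose_spec.symm⟩⟩

theorem isAdjointPair_star (T : hX.adjointable) :
    IsAdjointPair hX hX T (star T : hX.adjointable) :=
  T.2.choose_spec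

theorem star_eq {T S : hX.adjointable} (h : IsAdjointPair hX hX T S) : star T = S :=
  coe_injective ((isAdjointPair_star T).unique h)

instance : StarRing hX.adjointable where
  star_involutive T := star_eq (isAdjointPair_star T).symm
  star_mul T S := star_eq fun x y =>
    (isAdjointPair_star T _ _).trans (isAdjointPair_star S _ _)
  star_add T S := star_eq fun x y => by
    simp [hX.inner_add_left, hX.inner_add_right, isAdjointPair_star T x y,
      isAdjointPair_star S x y]

instance : StarModule ℂ hX.adjointable where
  star_smul c T := star_eq fun x y => by
    simp [inner_smulC_left, hX.inner_smulC_right, isAdjointPair_star T x y]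

instance : CStarRing hX.adjointable where
  norm_mul_self_le T := by
    set P : hX.adjointable := star T * T
    have norm_apply_le (x : X) : ‖T x‖ ≤ √‖P‖ * ‖x‖ := by
      refine le_of_sq_le_sq ?_ (by positivity)
      calc ‖T x‖ ^ 2 = ‖hX.inner x (P x)‖ := by
            rw [hX.norm_inner_self, isAdjointPair_star T]; rfl
        _ ≤ ‖x‖ * (‖P‖ * ‖x‖) := (hX.norm_inner_le _ _).trans <| by
            gcongr; exact P.1.le_opNorm x
        _ = (√‖P‖ * ‖x‖) ^ 2 := by rw [mul_pow, Real.sq_sqrt (norm_nonneg P)]; ring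
    have norm_le : ‖T‖ ≤ √‖P‖ :=
      ContinuousLinearMap.opNorm_le_bound _ (Real.sqrt_nonneg _) norm_apply_le
    rw [← sq]
    exact (Real.le_sqrt (norm_nonneg _) (norm_nonneg _)).1 norm_le

instance : CompleteSpace hX.adjointable := by
  refine Metric.complete_of_cauchySeq_tendsto fun T hT => ?_
  have hT_star : CauchySeq fun n => star (T n) :=
    hT.map (starₗᵢ ℂ (E := hX.adjointable)).isometry.uniformContinuous
  have exists_tendsto {T : ℕ → hX.adjointable} (hT : CauchySeq T) :
      ∃ R : X →L[ℂ] X, Tendsto (fun n => (T n : X →L[ℂ] X)) atTop (𝓝 R) :=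
    cauchySeq_tendsto_of_complete (hT.map uniformContinuous_subtype_val)
  obtain ⟨R, hR⟩ := exists_tendsto hT
  obtain ⟨S, hS⟩ := exists_tendsto hT_star
  have hRS : IsAdjointPair hX hX R S := fun x y =>
    tendsto_nhds_unique (((hX.continuous_inner_left y).tendsto _).comp (hR.eval_const x)) <|
      (((hX.continuous_inner_right x).tendsto _).comp (hS.eval_const y)).congr fun n =>
        (isAdjointPair_star (T n) x y).symm
  exact ⟨⟨R, S, hRS⟩, tendsto_subtype_rng.2 hR⟩

instance : CStarAlgebra hX.adjointable where

end adjointable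

theorem isAdjointPair_smulR_inner (u v : X) :
    IsAdjointPair hX hX (fun z => hX.smulR u (hX.inner v z))
      (fun z => hX.smulR v (hX.inner u z)) := fun x y => by
  rw [inner_smulR_left, hX.inner_smulR_right, hX.star_inner]

/-- The rank-one operator `Θ_{u,v} : z ↦ u ⟨v, z⟩`. -/
def rankOne (u v : X) : hX.adjointable :=
  ⟨hX.smulRight u ∘L hX.innerRight v, hX.smulRight v ∘L hX.innerRight u,
    hX.isAdjointPair_smulR_inner u v⟩

theorem norm_rankOne_le (u v : X) : ‖hX.rankOne u v‖ ≤ ‖u‖ * ‖v‖ := by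
  refine ContinuousLinearMap.opNorm_le_bound _ (by positivity) fun z => ?_
  calc ‖hX.smulR u (hX.inner v z)‖ ≤ ‖u‖ * ‖hX.inner v z‖ := hX.norm_smulR_le u _
    _ ≤ ‖u‖ * (‖v‖ * ‖z‖) := by gcongr; exact hX.norm_inner_le v z
    _ = ‖u‖ * ‖v‖ * ‖z‖ := (mul_assoc _ _ _).symm

theorem rankOne_add_left (u u' v : X) :
    hX.rankOne (u + u') v = hX.rankOne u v + hX.rankOne u' v :=
  adjointable.coe_injective <| funext fun z => hX.add_smulR u u' (hX.inner v z)

theorem continuous_rankOne_left (v : X) : Continuous fun u => hX.rankOne u v :=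
  AddMonoidHomClass.continuous_of_bound
    (AddMonoidHom.mk' (fun u => hX.rankOne u v) fun u u' => hX.rankOne_add_left u u' v) ‖v‖
    fun u => (hX.norm_rankOne_le u v).trans_eq (mul_comm _ _)

theorem smul_rankOne (c : ℂ) (u v : X) : c • hX.rankOne u v = hX.rankOne (c • u) v :=
  adjointable.coe_injective <| funext fun z => (hX.smulC_smulR c u (hX.inner v z)).symm

theorem star_rankOne (u v : X) : star (hX.rankOne u v) = hX.rankOne v u :=
  adjointable.star_eq (hX.isAdjointPair_smulR_inner u v)

theorem mul_rankOne (T : hX.adjointable) (u v : X) : T * hX.rankOne u v = hX.rankOne (T u) v :=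
  adjointable.coe_injective <| funext fun z => adjointable.map_smulR T u (hX.inner v z)

/-- The `⋆`-algebra of finite-rank operators on a Hilbert module. -/
def finiteRank : NonUnitalStarSubalgebra ℂ hX.adjointable where
  carrier := {T | ∃ (n : ℕ) (u v : Fin n → X), T = ∑ i, hX.rankOne (u i) (v i)}
  zero_mem' := ⟨0, Fin.elim0, Fin.elim0, rfl⟩
  add_mem' := by
    rintro _ _ ⟨m, u, v, rfl⟩ ⟨n, u', v', rfl⟩
    exact ⟨m + n, Fin.append u u', Fin.append v v', by simp [Fin.sum_univ_add]⟩
  smul_mem' := by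
    rintro c _ ⟨n, u, v, rfl⟩
    exact ⟨n, fun i => c • u i, v, by simp only [Finset.smul_sum, smul_rankOne]⟩
  mul_mem' := by
    rintro T _ - ⟨n, u, v, rfl⟩
    exact ⟨n, fun i => T (u i), v, by simp only [Finset.mul_sum, mul_rankOne]⟩
  star_mem' := by
    rintro _ ⟨n, u, v, rfl⟩
    exact ⟨n, v, u, by simp only [star_sum, star_rankOne]⟩

/-- The C⋆-algebra `𝓚(X)` of compact operators on a Hilbert module `X`. -/
def compacts : NonUnitalStarSubalgebra ℂ hX.adjointable :=
  hX.finiteRank.topologicalClosure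

instance : IsClosed (hX.compacts : Set hX.adjointable) :=
  hX.finiteRank.isClosed_topologicalClosure

/-- The compact operators on `X` as a type of its own, so that instance search finds its structure
through the C⋆-algebra instance below instead of unfolding the tower of subobjects. -/
def Compact : Type u := hX.compacts

instance : NonUnitalCStarAlgebra hX.Compact :=
  NonUnitalStarSubalgebra.nonUnitalCStarAlgebra hX.compacts

instance : CoeFun hX.Compact fun _ => X → X := ⟨fun K => (K.1 : X →L[ℂ] X)⟩

theorem rankOne_mem_compacts (u v : X) : hX.rankOne u v ∈ hX.compacts :=
  hX.finiteRank.le_topologicalClosure ⟨1, fun _ => u, fun _ => v, by simp⟩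

theorem sum_rankOne_apply {ι : Type*} (s : Finset ι) (u v : ι → X) (z : X) :
    (∑ i ∈ s, hX.rankOne (u i) (v i) : hX.adjointable) z =
      ∑ i ∈ s, hX.smulR (u i) (hX.inner (v i) z) := by
  simp only [AddSubmonoidClass.coe_finsetSum, _root_.sum_apply]
  rfl

variable {hX}

-- A strongly convergent sequence is bounded, so its convergence needs checking only on `Θ_{u,v}`.
open ContinuousLinearMap in
theorem tendsto_mul_of_mem_compacts {P : ℕ → hX.adjointable} {R K : hX.adjointable}
    (hP : ∀ z, Tendsto (fun N => P N z) atTop (𝓝 (R z))) (hK : K ∈ hX.compacts) :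
    Tendsto (fun N => P N * K) atTop (𝓝 (R * K)) := by
  have bounded : ∃ C, ∀ N, ‖P N‖ ≤ C :=
    banach_steinhaus (g := fun N => (P N : X →L[ℂ] X)) fun z =>
      (hP z).norm.bddAbove_range.imp fun C hC N => hC ⟨N, rfl⟩
  have equicontinuous : Equicontinuous fun N => (P N * · : hX.adjointable → hX.adjointable) := by
    refine ((NormedSpace.equicontinuous_TFAE fun N => mul ℂ hX.adjointable (P N)).out 1 5).2 ?_
    exact bounded.imp fun C hC N => (opNorm_mul_apply_le ℂ _ (P N)).trans (hC N)
  have isClosed : IsClosed {K | Tendsto (fun N => P N * K) atTop (𝓝 (R * K))} :=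
    equicontinuous.isClosed_setOfPred_tendsto (continuous_const_mul R)
  refine closure_minimal ?_ isClosed hK
  rintro _ ⟨n, u, v, rfl⟩
  simp only [Set.mem_ofPred_eq, Finset.mul_sum, mul_rankOne]
  exact tendsto_finsetSum _ fun i _ =>
    ((hX.continuous_rankOne_left (v i)).tendsto _).comp (hP (u i))

end HilbertModule

namespace IsCptOn

variable {B X : Type u} [NonUnitalCStarAlgebra B] [NormedAddCommGroup X] [NormedSpace ℂ X]
  [CompleteSpace X] {hX : HilbertModule B X}

open HilbertModule

theorem coe_compact (K : hX.Compact) : IsCptOn hX id K := by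
  intro ε hε
  obtain ⟨_, ⟨n, u, v, rfl⟩, hKR⟩ := Metric.mem_closure_iff.1 K.2 ε hε
  refine ⟨n, u, v, fun z => ?_⟩
  simp only [id, ← hX.sum_rankOne_apply]
  set R : hX.adjointable := ∑ i, hX.rankOne (u i) (v i)
  calc ‖K z - R z‖ ≤ ‖K.1 - R‖ * ‖z‖ := (K.1 - R).1.le_opNorm z
    _ ≤ ε * ‖z‖ := by gcongr; exact (dist_eq_norm K.1 R ▸ hKR).le

theorem exists_compact {T : X → X} (hT : IsCptOn hX id T) : ∃ K : hX.Compact, ⇑K = T := by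
  have exists_approx (k : ℕ) : ∃ R : hX.Compact, ∀ z, ‖T z - R z‖ ≤ 1 / ((k : ℝ) + 1) * ‖z‖ := by
    obtain ⟨n, u, v, h⟩ := hT (1 / ((k : ℝ) + 1)) (by positivity)
    refine ⟨⟨∑ i, hX.rankOne (u i) (v i), sum_mem fun i _ => hX.rankOne_mem_compacts _ _⟩, ?_⟩
    simpa only [id, hX.sum_rankOne_apply] using h
  choose R hR using exists_approx
  have tendsto_inv : Tendsto (fun k : ℕ => 1 / ((k : ℝ) + 1)) atTop (𝓝 0) :=
    tendsto_one_div_add_atTop_nhds_zero_nat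
  have cauchy : CauchySeq R := by
    refine cauchySeq_of_le_tendsto_0 (fun N : ℕ => 1 / ((N : ℝ) + 1) + 1 / ((N : ℝ) + 1))
      (fun k l N hk hl => ?_) (add_zero (0 : ℝ) ▸ tendsto_inv.add tendsto_inv)
    rw [dist_eq_norm]
    refine ContinuousLinearMap.opNorm_le_bound _ (by positivity) fun z => ?_
    calc ‖R k z - R l z‖ ≤ ‖T z - R k z‖ + ‖T z - R l z‖ := by
          rw [norm_sub_rev (T z)]; exact norm_sub_le_norm_sub_add_norm_sub _ _ _
      _ ≤ 1 / ((k : ℝ) + 1) * ‖z‖ + 1 / ((l : ℝ) + 1) * ‖z‖ := add_le_add (hR k z) (hR l z)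
      _ ≤ (1 / ((N : ℝ) + 1) + 1 / ((N : ℝ) + 1)) * ‖z‖ := by rw [← add_mul]; gcongr
  obtain ⟨K, hK⟩ := cauchySeq_tendsto_of_complete cauchy
  have tendsto_K (z : X) : Tendsto (fun k => R k z) atTop (𝓝 (K z)) :=
    (((continuous_subtype_val.comp continuous_subtype_val).tendsto K).comp hK).eval_const z
  have tendsto_T (z : X) : Tendsto (fun k => R k z) atTop (𝓝 (T z)) := by
    refine tendsto_iff_norm_sub_tendsto_zero.2 (squeeze_zero (fun _ => norm_nonneg _)
      (fun k => norm_sub_rev (T z) (R k z) ▸ hR k z) ?_)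
    simpa only [zero_mul] using tendsto_inv.mul_const ‖z‖
  exact ⟨K, funext fun z => tendsto_nhds_unique (tendsto_K z) (tendsto_T z)⟩

end IsCptOn

namespace UpsilonData

open HilbertModule

variable {A B F : Type u} [NonUnitalCStarAlgebra A] [NonUnitalCStarAlgebra B]
  [NormedAddCommGroup F] [NormedSpace ℂ F] [CompleteSpace F] {bi : BiHilbertModule A B F}
  (U : UpsilonData bi)

-- `U.add` only gives additivity; homogeneity comes from `A`-linearity, as
-- `Υ (c K) a = Υ (c K a) = Υ (K (c a)) = c Υ (K) a` for every `a`.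
theorem Υ_smul (c : ℂ) (K : bi.right.Compact) : U.Υ (c • K : bi.right.Compact) = c • U.Υ K := by
  refine (ContinuousLinearMap.isometry_mul ℂ A).injective (ContinuousLinearMap.ext fun a => ?_)
  have smul_apply_actL (z : F) :
      (c • K : bi.right.Compact) (bi.actL a z) = K (bi.actL (c • a) z) := by
    rw [bi.actL_corr.map_smul]
    exact (K.1.1.map_smul c _).symm
  calc U.Υ (c • K : bi.right.Compact) * a = U.Υ fun z => K (bi.actL (c • a) z) := by
        rw [← U.bilin_right a _ (.coe_compact _), funext smul_apply_actL]
    _ = c • U.Υ K * a := by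
        rw [U.bilin_right _ _ (.coe_compact _), mul_smul_comm, smul_mul_assoc]

section Positivity

attribute [local instance] CStarAlgebra.spectralOrder CStarAlgebra.spectralOrderedRing

/-- `Υ` as a positive linear map `𝓚(F) → A` of C⋆-algebras; it is therefore continuous and
`⋆`-preserving. -/
def positiveMap : bi.right.Compact →ₚ[ℂ] A :=
  .mk₀
    { toFun K := U.Υ K
      map_add' K L := U.add K L (.coe_compact K) (.coe_compact L)
      map_smul' := U.Υ_smul } fun P hP => by
    obtain ⟨K, rfl⟩ := CStarAlgebra.nonneg_iff_eq_star_mul_self.1 hP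
    obtain ⟨a, ha⟩ := U.pos K _ (.coe_compact K) (adjointable.isAdjointPair_star K.1)
    exact (star_mul_self_nonneg a).trans_eq ha.symm

theorem continuous_Υ : Continuous fun K : bi.right.Compact => U.Υ K :=
  map_continuous U.positiveMap

theorem Υ_star (K : bi.right.Compact) : U.Υ (star K : bi.right.Compact) = star (U.Υ K) :=
  map_star U.positiveMap K

theorem Υ_sum_rankOne {ι : Type*} (s : Finset ι) (u v : ι → F) :
    U.Υ (∑ i ∈ s, bi.right.rankOne (u i) (v i) : bi.right.adjointable) =
      ∑ i ∈ s, bi.innerL (u i) (v i) := by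
  let R (i : ι) : bi.right.Compact := ⟨_, bi.right.rankOne_mem_compacts (u i) (v i)⟩
  have coe_sum : (∑ i ∈ s, R i).1 = ∑ i ∈ s, bi.right.rankOne (u i) (v i) :=
    AddSubmonoidClass.coe_finsetSum (S := bi.right.compacts) _ s
  rw [← coe_sum]
  exact (map_sum U.positiveMap R s).trans (Finset.sum_congr rfl fun i _ => U.rank_one (u i) (v i))

end Positivity

theorem Υ_adjoint_comp_actL {T T' : F → F} (hT : IsCptOn bi.right id T)
    (hTT' : IsAdjointPair bi.right bi.right T T') (a : A) :
    U.Υ (fun z => T' (bi.actL a z)) = star (U.Υ T) * a := by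
  obtain ⟨K, rfl⟩ := hT.exists_compact
  obtain rfl : T' = (star K : bi.right.Compact) :=
    hTT'.unique (adjointable.isAdjointPair_star K.1)
  rw [U.bilin_right a _ (.coe_compact _), U.Υ_star]

end UpsilonData

theorem MultiplierData.isometry_ι {A MA : Type u} [NonUnitalCStarAlgebra A] [CStarAlgebra MA]
    (M : MultiplierData A MA) : Isometry M.ι :=
  AddMonoidHomClass.isometry_of_norm M.ι M.isometric

namespace WatataniData

open HilbertModule

variable {A B F MA : Type u} [NonUnitalCStarAlgebra A] [NonUnitalCStarAlgebra B]
  [CStarAlgebra MA] [NormedAddCommGroup F] [NormedSpace ℂ F] [CompleteSpace F]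
  {bi : BiHilbertModule A B F} {M : MultiplierData A MA} (W : WatataniData bi M)

theorem star_einvβ : star W.einvβ = W.einvβ := by
  obtain ⟨c, hc⟩ := W.ehalf_pos
  rw [← W.ehalf_sq, star_mul, hc, star_mul, star_star]

theorem exists_actL_eq_actM (m : MA) (a : A) :
    ∃ b, M.ι b = m * M.ι a ∧ W.actM (m * M.ι a) = bi.actL b := by
  obtain ⟨b, hb⟩ := M.ideal_left m a
  exact ⟨b, hb, hb ▸ funext (W.actM_ι b)⟩

variable (U : UpsilonData bi)

-- Expand `a = lim ∑ⱼ Θ_{uⱼ,uⱼ} a` along the frame; the limit is in norm because `a` is compact.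
theorem ι_Υ_actL (a : A) : M.ι (U.Υ (bi.actL a)) = W.eβ * M.ι a := by
  obtain ⟨K, hK⟩ := (W.finite_index a).exists_compact
  let P (N : ℕ) : bi.right.Compact :=
    ⟨∑ j ∈ Finset.range N, bi.right.rankOne (W.frame j) (W.frame j),
      sum_mem fun j _ => bi.right.rankOne_mem_compacts _ _⟩
  have tendsto_apply (z : F) : Tendsto (fun N => P N z) atTop (𝓝 z) := by
    simpa only [P, bi.right.sum_rankOne_apply] using W.frame_spec z
  have tendsto_mul : Tendsto (fun N => P N * K) atTop (𝓝 K) := by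
    have := tendsto_mul_of_mem_compacts (P := fun N => (P N).1) (R := 1) tendsto_apply K.2
    rw [one_mul] at this
    exact tendsto_subtype_rng.2 this
  have Υ_mul (N : ℕ) : U.Υ (P N * K : bi.right.Compact) =
      (∑ j ∈ Finset.range N, bi.innerL (W.frame j) (W.frame j)) * a := by
    rw [← U.Υ_sum_rankOne, ← U.bilin_right a _ (.coe_compact (P N)), ← hK]
    rfl
  have tendsto_ι_Υ : Tendsto (fun N => M.ι (U.Υ (P N * K : bi.right.Compact))) atTop
      (𝓝 (M.ι (U.Υ K))) :=
    ((M.isometry_ι.continuous.comp U.continuous_Υ).tendsto K).comp tendsto_mul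
  rw [← hK]
  refine tendsto_nhds_unique tendsto_ι_Υ ((W.index_spec a).congr fun N => ?_)
  rw [Υ_mul, map_mul, map_sum, Finset.sum_mul]

/-- The projection `P₀(T) = e^{-β} Υ(T) Id_F` of the operators on `F` onto `A · Id_F`. -/
def proj (T : F → F) : F → F := W.actM (W.einvβ * M.ι (U.Υ T))

theorem exists_proj_eq_actL (T : F → F) : ∃ b, W.proj U T = bi.actL b :=
  (W.exists_actL_eq_actM W.einvβ (U.Υ T)).imp fun _ hb => hb.2

theorem proj_actL (a : A) : W.proj U (bi.actL a) = bi.actL a := by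
  have mul_ι_Υ : W.einvβ * M.ι (U.Υ (bi.actL a)) = M.ι a := by
    rw [W.ι_Υ_actL, ← mul_assoc, W.einvβ_central, W.eβ_inv, one_mul]
  rw [proj, mul_ι_Υ]
  exact funext (W.actM_ι a)

theorem isCptOn_proj (T : F → F) : IsCptOn bi.right id (W.proj U T) := by
  obtain ⟨b, hb⟩ := W.exists_proj_eq_actL U T
  exact hb ▸ W.finite_index b

theorem proj_proj (T : F → F) : W.proj U (W.proj U T) = W.proj U T := by
  obtain ⟨b, hb⟩ := W.exists_proj_eq_actL U T
  rw [hb, proj_actL]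

variable {U}

theorem proj_actL_comp (a : A) {T : F → F} (hT : IsCptOn bi.right id T) :
    W.proj U (fun z => bi.actL a (T z)) = fun z => bi.actL a (W.proj U T z) := by
  funext z
  rw [proj, U.bilin_left a T hT, map_mul, ← mul_assoc, W.einvβ_central, mul_assoc, W.actM_mul,
    W.actM_ι, proj]

theorem proj_comp_actL (a : A) {T : F → F} (hT : IsCptOn bi.right id T) :
    W.proj U (fun z => T (bi.actL a z)) = fun z => W.proj U T (bi.actL a z) := by
  funext z
  rw [proj, U.bilin_right a T hT, map_mul, ← mul_assoc, W.actM_mul, W.actM_ι, proj]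

/-- This is `⟨P₀ T, S⟩_A = ⟨T, P₀ S⟩_A`, where `⟨T, S⟩_A = Υ(T† S)`. -/
theorem Υ_proj_left_eq_right {T T' S : F → F} (hT : IsCptOn bi.right id T)
    (hS : IsCptOn bi.right id S) (hTT' : IsAdjointPair bi.right bi.right T T') :
    U.Υ (fun z => W.actM (star (W.einvβ * M.ι (U.Υ T))) (S z)) =
      U.Υ fun z => T' (W.proj U S z) := by
  obtain ⟨a, ha, -⟩ := W.exists_actL_eq_actM W.einvβ (U.Υ T)
  obtain ⟨b, hb, proj_S⟩ := W.exists_actL_eq_actM W.einvβ (U.Υ S)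
  refine M.isometry_ι.injective ?_
  calc M.ι (U.Υ fun z => W.actM (star (W.einvβ * M.ι (U.Υ T))) (S z))
      = star (M.ι a) * M.ι (U.Υ S) := by
        simp only [← ha, ← map_star, W.actM_ι, U.bilin_left _ _ hS, map_mul]
    _ = star (M.ι (U.Υ T)) * M.ι b := by
        rw [ha, hb, star_mul, W.star_einvβ, mul_assoc]
    _ = M.ι (U.Υ fun z => T' (W.proj U S z)) := by
        rw [proj, proj_S, U.Υ_adjoint_comp_actL hT hTT', map_mul, map_star]

variable (U) in
theorem Υ_actM_ehalf (a a' : A) :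
    U.Υ (W.actM (W.ehalf * M.ι (star a) * M.ι a' * W.ehalf)) = star a * a' := by
  have mul_eq : W.ehalf * M.ι (star a) * M.ι a' * W.ehalf = W.einvβ * M.ι (star a * a') := by
    rw [← W.ehalf_central, ← W.ehalf_sq, map_mul, mul_assoc W.ehalf, mul_assoc]
  obtain ⟨b, hb, actM_eq⟩ := W.exists_actL_eq_actM W.einvβ (star a * a')
  refine M.isometry_ι.injective ?_
  rw [mul_eq, actM_eq, W.ι_Υ_actL, hb, ← mul_assoc, W.eβ_inv, one_mul]

end WatataniData

/-- Let `F` be a regular bi-Hilbertian `A`–`B`-bimodule with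
right Watatani index `e^β ∈ M(A)`.  Then `P₀ : K(F_B) → K(F_B)`,
`P₀(T) = e^{−β} Υ(T) Id_F`, is an `A`-bilinear adjointable projection on the
bi-Hilbertian bimodule `K(F_B) ≅ F ⊗_B F*` (with right `A`-valued inner product
`⟨T, S⟩_A = Υ(T† S)`), and its image `A · Id_F` is a complemented sub-bimodule
isomorphic to the identity bimodule `A` (via `a ↦ a e^{−β/2} Id_F = aZ`, which
satisfies `⟨aZ, a'Z⟩_A = a* a'`). -/
theorem watatani_projection {A B F MA : Type u}
    [NonUnitalCStarAlgebra A] [NonUnitalCStarAlgebra B] [CStarAlgebra MA]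
    [NormedAddCommGroup F] [NormedSpace ℂ F] [CompleteSpace F]
    (bi : BiHilbertModule A B F) (M : MultiplierData A MA)
    (W : WatataniData bi M) (U : UpsilonData bi) :
    -- the projection `P₀(T) = e^{-β} Υ(T) Id_F`
    letI P₀ : (F → F) → (F → F) := fun T => fun z => W.actM (W.einvβ * M.ι (U.Υ T)) z
    -- `P₀` maps compacts to compacts
    (∀ T : F → F, IsCptOn bi.right id T → IsCptOn bi.right id (P₀ T)) ∧
    -- `P₀` is idempotent on compacts
    (∀ T : F → F, IsCptOn bi.right id T → P₀ (P₀ T) = P₀ T) ∧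
    -- `P₀` is `A`-bilinear
    (∀ (a : A) (T : F → F), IsCptOn bi.right id T →
      P₀ (fun z => bi.actL a (T z)) = (fun z => bi.actL a (P₀ T z)) ∧
      P₀ (fun z => T (bi.actL a z)) = (fun z => P₀ T (bi.actL a z))) ∧
    -- `P₀` is self-adjoint for the right `A`-valued inner product `⟨T,S⟩ = Υ(T† S)`
    (∀ T T' S : F → F, IsCptOn bi.right id T → IsCptOn bi.right id S →
      HilbertModule.IsAdjointPair bi.right bi.right T T' →
      U.Υ (fun z => W.actM (star (W.einvβ * M.ι (U.Υ T))) (S z)) =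
        U.Υ (fun z => T' (P₀ S z))) ∧
    -- image `A · Id_F`: a complemented sub-bimodule isomorphic to `A`
    (∀ a : A, IsCptOn bi.right id (fun z => bi.actL a z) ∧
      P₀ (fun z => bi.actL a z) = (fun z => bi.actL a z)) ∧
    (∀ T : F → F, IsCptOn bi.right id T → ∃ a : A, P₀ T = fun z => bi.actL a z) ∧
    -- the isomorphism with the identity bimodule: `⟨aZ, a'Z⟩_A = a* a'`
    (∀ a a' : A,
      U.Υ (fun z => W.actM (W.ehalf * M.ι (star a) * M.ι a' * W.ehalf) z) = star a * a') := by
  exact ⟨fun T _ => W.isCptOn_proj U T, fun T _ => W.proj_proj U T,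
    fun a T hT => ⟨W.proj_actL_comp a hT, W.proj_comp_actL a hT⟩,
    fun T T' S hT hS hTT' => W.Υ_proj_left_eq_right hT hS hTT',
    fun a => ⟨W.finite_index a, W.proj_actL U a⟩, fun T _ => W.exists_proj_eq_actL U T,
    W.Υ_actM_ehalf U⟩
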